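/- arXiv:1001.3859 — 2 statements merged into one kernel-verified Lean document; each statement's English description precedes it below -/
import Mathlib

section
/- Eigenvalue bound for Algorithm I's matrix rate: assume X has full rank m ≥ 2 and w* ∈ Ω is a global maximizer of det M(w) over Ω̄ with all coordinates positive. Then all eigenvalues of R(0), the Jacobian at w* of the Algorithm I map T_0(w)_i = w_i·(x_iᵀ M(w)^{-1} x_i)/m, lie in the interval [0, 1]. -/
open Matrix Filter

/-- The information matrix `M(w) = ∑ i, w_i x_i x_iᵀ`. -/
noncomputable def Mmat {n m : ℕ} (x : Fin n → Fin m → ℝ) (w : Fin n → ℝ) :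
    Matrix (Fin m) (Fin m) ℝ :=
  ∑ i, w i • Matrix.vecMulVec (x i) (x i)

/-- The multiplicative update map `T_α(w)_i = w_i (x_iᵀ M(w)⁻¹ x_i − α)/(m − α)`. -/
noncomputable def Talg {n m : ℕ} (x : Fin n → Fin m → ℝ) (α : ℝ) (w : Fin n → ℝ) :
    Fin n → ℝ :=
  fun i => w i * ((x i ⬝ᵥ (Mmat x w)⁻¹ *ᵥ x i) - α) / ((m : ℝ) - α)

/-!
Let `H = X M(w)⁻¹ Xᵀ`, `W = diag(w)` and `J = diag(H) - W (H ⊙ H)`, so that the Jacobian of `T_α`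
is `(m - α)⁻¹ (J - α)`. Since `H W H = H`, the rows of `A = W (H ⊙ H) W` sum to `w_i H_ii`, so
`J W = diag(A 1) - A` is the Laplacian of the nonnegative weights `A` and hence positive
semidefinite. If `H_ii ≤ c` for all `i`, then `c W - J W = diag((c - H_ii) w_i) + A` is positive
semidefinite as well, by the Schur product theorem. Pairing `J v = ν v` with `u = W⁻¹ v` then gives
`0 ≤ ν ≤ c`. At a maximizer, moving mass towards the `i`-th point cannot increase the determinant,
so `1 + t H_ii ≤ (1 + t)^m` for all `t ≥ 0`, and comparing slopes at `t = 0` gives `H_ii ≤ m`.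
-/

section PosSemidef

open scoped ComplexOrder

open scoped MatrixOrder in
lemma posSemidef_map_ofReal {ι : Type*} [Finite ι] {A : Matrix ι ι ℝ} (hA : A.PosSemidef) :
    (A.map ((↑) : ℝ → ℂ)).PosSemidef := by
  classical
  have := Fintype.ofFinite ι
  obtain ⟨B, rfl⟩ := CStarAlgebra.nonneg_iff_eq_star_mul_self.mp hA.nonneg
  have hmap : (star B * B).map ((↑) : ℝ → ℂ) =
      (B.map ((↑) : ℝ → ℂ))ᴴ * B.map ((↑) : ℝ → ℂ) := by
    ext i j
    simp [Matrix.mul_apply, star_eq_conjTranspose]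
  rw [hmap]
  exact posSemidef_conjTranspose_mul_self _

variable {ι : Type*} [Fintype ι]

lemma two_mul_dotProduct_diagonal_rowSum_sub_mulVec {R : Type*} [CommRing R] [DecidableEq ι]
    {A : Matrix ι ι R} (hA : A.IsSymm) (z : ι → R) :
    2 * (z ⬝ᵥ (diagonal (A *ᵥ 1) - A) *ᵥ z) = ∑ i, ∑ j, A i j * (z i - z j) ^ 2 := by
  have hswap : ∑ i, ∑ j, A i j * z j ^ 2 = ∑ i, ∑ j, A i j * z i ^ 2 := by
    rw [Finset.sum_comm]
    simp only [hA.apply]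
  have hquad : z ⬝ᵥ (diagonal (A *ᵥ 1) - A) *ᵥ z =
      ∑ i, ∑ j, A i j * z i ^ 2 - ∑ i, ∑ j, A i j * z i * z j := by
    rw [sub_mulVec, dotProduct_sub]
    simp only [dotProduct, mulVec_diagonal]
    simp only [mulVec, dotProduct, Pi.one_apply, mul_one, Finset.mul_sum, Finset.sum_mul]
    congr 1 <;> exact Finset.sum_congr rfl fun i _ => Finset.sum_congr rfl fun j _ => by ring
  have hexpand : ∑ i, ∑ j, A i j * (z i - z j) ^ 2 = ∑ i, ∑ j, A i j * z i ^ 2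
      + ∑ i, ∑ j, A i j * z j ^ 2 - 2 * ∑ i, ∑ j, A i j * z i * z j := by
    simp only [Finset.mul_sum, ← Finset.sum_add_distrib, ← Finset.sum_sub_distrib]
    exact Finset.sum_congr rfl fun i _ => Finset.sum_congr rfl fun j _ => by ring
  rw [hquad, hexpand, hswap]
  ring

lemma posSemidef_diagonal_rowSum_sub [DecidableEq ι] {A : Matrix ι ι ℝ} (hA : A.IsSymm)
    (hA₀ : ∀ i j, 0 ≤ A i j) : (diagonal (A *ᵥ 1) - A).PosSemidef := by
  have hsymm : (diagonal (A *ᵥ 1) - A).IsSymm := (isSymm_diagonal _).sub hA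
  refine .of_dotProduct_mulVec_nonneg hsymm fun z => ?_
  have hsum : 0 ≤ ∑ i, ∑ j, A i j * (z i - z j) ^ 2 :=
    Finset.sum_nonneg fun i _ => Finset.sum_nonneg fun j _ => mul_nonneg (hA₀ i j) (sq_nonneg _)
  rw [← two_mul_dotProduct_diagonal_rowSum_sub_mulVec hA] at hsum
  exact nonneg_of_mul_nonneg_right hsum zero_lt_two

lemma mem_Icc_of_mulVec_eq_smul_mulVec {A B : Matrix ι ι ℂ} {c : ℝ} (hA : A.PosSemidef)
    (hB : B.PosSemidef) (hAB : (c • B - A).PosSemidef) {u : ι → ℂ} {ν : ℂ} (hu : B *ᵥ u ≠ 0)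
    (hν : A *ᵥ u = ν • B *ᵥ u) : ∃ r : ℝ, ν = r ∧ r ∈ Set.Icc 0 c := by
  have hpos : 0 < star u ⬝ᵥ B *ᵥ u :=
    (hB.dotProduct_mulVec_nonneg u).lt_of_ne' fun h => hu ((hB.dotProduct_mulVec_zero_iff u).mp h)
  have hlower : 0 ≤ ν := by
    have h := hA.dotProduct_mulVec_nonneg u
    rw [hν, dotProduct_smul, smul_eq_mul] at h
    exact le_of_mul_le_mul_right (by rwa [zero_mul]) hpos
  have hupper : 0 ≤ (c : ℂ) - ν := by
    have h := hAB.dotProduct_mulVec_nonneg u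
    rw [sub_mulVec, hν, smul_mulVec, dotProduct_sub, dotProduct_smul, dotProduct_smul,
      Complex.real_smul, smul_eq_mul, ← sub_mul] at h
    exact le_of_mul_le_mul_right (by rwa [zero_mul]) hpos
  obtain ⟨r, rfl⟩ : ∃ r : ℝ, ν = r := ⟨ν.re, Complex.eq_re_of_ofReal_le (r := 0) hlower⟩
  exact ⟨r, rfl, by exact_mod_cast hlower, by exact_mod_cast sub_nonneg.mp hupper⟩

lemma mem_Icc_of_posSemidef_mul_diagonal [DecidableEq ι] {J : Matrix ι ι ℝ} {w : ι → ℝ} {c : ℝ}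
    (hw : 0 ≤ w) (hJ : (J * diagonal w).PosSemidef)
    (hcJ : (c • diagonal w - J * diagonal w).PosSemidef) {v : ι → ℂ} {ν : ℂ} (hv : v ≠ 0)
    (hsupp : ∀ i, w i = 0 → v i = 0) (hν : J.map ((↑) : ℝ → ℂ) *ᵥ v = ν • v) :
    ∃ r : ℝ, ν = r ∧ r ∈ Set.Icc 0 c := by
  let W : Matrix ι ι ℂ := (diagonal w).map ((↑) : ℝ → ℂ)
  let u : ι → ℂ := fun i => v i / w i
  have hWu : W *ᵥ u = v := by
    ext i
    have hi : (w i : ℂ) = 0 → v i = 0 := fun h => hsupp i (Complex.ofReal_eq_zero.mp h)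
    simpa [W, u, diagonal_map, mulVec_diagonal] using mul_div_cancel_of_imp' hi
  have hJW : (J * diagonal w).map ((↑) : ℝ → ℂ) = J.map ((↑) : ℝ → ℂ) * W :=
    Matrix.map_mul (f := Complex.ofRealHom)
  have hcJW : (c • diagonal w - J * diagonal w).map ((↑) : ℝ → ℂ) =
      c • W - (J * diagonal w).map ((↑) : ℝ → ℂ) := by
    ext i j
    simp only [W, Matrix.map_apply, Matrix.sub_apply, Matrix.smul_apply, Complex.real_smul,
      Complex.ofReal_sub, Complex.ofReal_mul, smul_eq_mul]
  refine mem_Icc_of_mulVec_eq_smul_mulVec (posSemidef_map_ofReal hJ)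
    (posSemidef_map_ofReal (PosSemidef.diagonal hw)) (hcJW ▸ posSemidef_map_ofReal hcJ)
    (u := u) (hWu.trans_ne hv) ?_
  rw [hJW, ← mulVec_mulVec, hWu, hν]

lemma hasEigenvalue_toLin'_smul_add_smul_one {K : Type*} [Field K] [DecidableEq ι]
    {A : Matrix ι ι K} {μ : K} (hμ : Module.End.HasEigenvalue (toLin' A) μ) (a b : K) :
    Module.End.HasEigenvalue (toLin' (a • A + b • 1)) (a * μ + b) := by
  obtain ⟨v, hv⟩ := hμ.exists_hasEigenvector
  have hAv : A *ᵥ v = μ • v := hv.apply_eq_smul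
  refine Module.End.hasEigenvalue_of_hasEigenvector
    ⟨Module.End.mem_eigenspace_iff.mpr ?_, hv.2⟩
  rw [toLin'_apply, add_mulVec, smul_mulVec, smul_mulVec, one_mulVec, hAv, smul_smul, add_smul]

end PosSemidef

section Design

variable {n m : ℕ} {x : Fin n → Fin m → ℝ} {w : Fin n → ℝ}

lemma mulVec_injective_of_rank_eq (hrank : (Matrix.of x).rank = m) :
    Function.Injective (Matrix.of x).mulVec := by
  rw [mulVec_injective_iff, linearIndependent_iff_card_eq_finrank_span, Fintype.card_fin,
    Set.finrank, ← rank_eq_finrank_span_cols, hrank]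

lemma Mmat_eq_transpose_mul_diagonal_mul (x : Fin n → Fin m → ℝ) (w : Fin n → ℝ) :
    Mmat x w = (Matrix.of x)ᵀ * diagonal w * Matrix.of x := by
  ext k l
  simp only [Mmat, Matrix.sum_apply, Matrix.smul_apply, vecMulVec_apply, smul_eq_mul,
    Matrix.mul_apply (M := (Matrix.of x)ᵀ * diagonal w), mul_diagonal, transpose_apply, of_apply]
  exact Finset.sum_congr rfl fun i _ => by ring

lemma Mmat_posSemidef (hw : 0 ≤ w) : (Mmat x w).PosSemidef := by
  rw [Mmat_eq_transpose_mul_diagonal_mul]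
  exact (PosSemidef.diagonal hw).conjTranspose_mul_mul_same (Matrix.of x)

lemma Mmat_posDef (hrank : (Matrix.of x).rank = m) (hw : ∀ i, 0 < w i) : (Mmat x w).PosDef := by
  rw [Mmat_eq_transpose_mul_diagonal_mul]
  exact (PosDef.diagonal hw).conjTranspose_mul_mul_same (mulVec_injective_of_rank_eq hrank)

lemma Mmat_add_single (x : Fin n → Fin m → ℝ) (w : Fin n → ℝ) (j : Fin n) (t : ℝ) :
    Mmat x (w + Pi.single j t) = Mmat x w + t • vecMulVec (x j) (x j) := by
  simp [Mmat, add_smul, Finset.sum_add_distrib, Pi.single_apply, ite_smul]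

lemma Mmat_smul (x : Fin n → Fin m → ℝ) (w : Fin n → ℝ) (c : ℝ) :
    Mmat x (c • w) = c • Mmat x w := by
  simp [Mmat, Finset.smul_sum, mul_smul]

/-- The covariance kernel `H = X M(w)⁻¹ Xᵀ` of a design, with entries `x_iᵀ M(w)⁻¹ x_j`; its
diagonal is the variance function of the design. -/
noncomputable def covKernel (x : Fin n → Fin m → ℝ) (w : Fin n → ℝ) :
    Matrix (Fin n) (Fin n) ℝ :=
  Matrix.of x * (Mmat x w)⁻¹ * (Matrix.of x)ᵀ

lemma covKernel_apply (x : Fin n → Fin m → ℝ) (w : Fin n → ℝ) (i j : Fin n) :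
    covKernel x w i j = x i ⬝ᵥ (Mmat x w)⁻¹ *ᵥ x j := by
  rw [covKernel, Matrix.mul_assoc]
  rfl

lemma covKernel_isSymm (x : Fin n → Fin m → ℝ) (w : Fin n → ℝ) : (covKernel x w).IsSymm := by
  have hM : (Mmat x w)ᵀ = Mmat x w := by
    simp [Mmat_eq_transpose_mul_diagonal_mul, Matrix.mul_assoc]
  rw [IsSymm, covKernel, transpose_mul, transpose_mul, transpose_transpose,
    transpose_nonsing_inv, hM, Matrix.mul_assoc]

lemma covKernel_posSemidef (hw : 0 ≤ w) : (covKernel x w).PosSemidef :=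
  (Mmat_posSemidef hw).inv.mul_mul_conjTranspose_same (Matrix.of x)

lemma covKernel_mul_diagonal_mul_covKernel (x : Fin n → Fin m → ℝ) (w v : Fin n → ℝ) :
    covKernel x w * diagonal v * covKernel x w =
      Matrix.of x * ((Mmat x w)⁻¹ * Mmat x v * (Mmat x w)⁻¹) * (Matrix.of x)ᵀ := by
  simp only [covKernel, Mmat_eq_transpose_mul_diagonal_mul x v, Matrix.mul_assoc]

lemma covKernel_mul_diagonal_mul_self (hM : IsUnit (Mmat x w).det) :
    covKernel x w * diagonal w * covKernel x w = covKernel x w := by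
  rw [covKernel_mul_diagonal_mul_covKernel, nonsing_inv_mul _ hM, Matrix.one_mul, covKernel]

lemma diag_covKernel_mul_diagonal_mul_covKernel (x : Fin n → Fin m → ℝ) (w v : Fin n → ℝ) :
    (covKernel x w * diagonal v * covKernel x w).diag =
      (covKernel x w ⊙ covKernel x w) *ᵥ v := by
  ext i
  simp only [diag_apply, Matrix.mul_apply (N := covKernel x w), mul_diagonal, mulVec, dotProduct,
    hadamard_apply]
  refine Finset.sum_congr rfl fun j _ => ?_
  rw [(covKernel_isSymm x w).apply i j]
  ring

lemma hadamard_covKernel_mulVec_self (hM : IsUnit (Mmat x w).det) :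
    (covKernel x w ⊙ covKernel x w) *ᵥ w = (covKernel x w).diag := by
  rw [← diag_covKernel_mul_diagonal_mul_covKernel, covKernel_mul_diagonal_mul_self hM]

open scoped Matrix.Norms.Operator in
lemma hasFDerivAt_diag_covKernel (hM : IsUnit (Mmat x w).det) :
    HasFDerivAt (fun v => (covKernel x v).diag)
      (-LinearMap.toContinuousLinearMap (toLin' (covKernel x w ⊙ covKernel x w))) w := by
  let L : (Fin n → ℝ) →L[ℝ] Matrix (Fin m) (Fin m) ℝ :=
    ∑ k, (ContinuousLinearMap.proj k).smulRight (vecMulVec (x k) (x k))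
  have hL : ⇑L = Mmat x := by
    ext1 v
    simp [L, Mmat]
  let diagConj : Matrix (Fin m) (Fin m) ℝ →L[ℝ] Fin n → ℝ := LinearMap.toContinuousLinearMap
    { toFun := fun A => (Matrix.of x * A * (Matrix.of x)ᵀ).diag
      map_add' := fun A B => by rw [Matrix.mul_add, Matrix.add_mul, diag_add]
      map_smul' := fun c A => by
        rw [Matrix.mul_smul, Matrix.smul_mul, diag_smul, RingHom.id_apply] }
  obtain ⟨U, hU⟩ := (isUnit_iff_isUnit_det _).mpr hM
  have hinv := hasFDerivAt_ringInverse (𝕜 := ℝ) U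
  rw [coe_units_inv, hU, ← hL] at hinv
  convert! diagConj.hasFDerivAt.comp w (hinv.comp w L.hasFDerivAt) using 1
  · ext1 v
    simp only [covKernel, Function.comp_apply, hL, nonsing_inv_eq_ringInverse]
    rfl
  · ext1 v
    change -((covKernel x w ⊙ covKernel x w) *ᵥ v) =
      (Matrix.of x * -((L w)⁻¹ * L v * (L w)⁻¹) * (Matrix.of x)ᵀ).diag
    rw [← diag_covKernel_mul_diagonal_mul_covKernel, covKernel_mul_diagonal_mul_covKernel, hL,
      Matrix.mul_neg, Matrix.neg_mul, diag_neg]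

/-- The Jacobian `J = diag(H) - diag(w) (H ⊙ H)` at `w` of the map
`w ↦ (w_i x_iᵀ M(w)⁻¹ x_i)_i`, where `H` is the covariance kernel. -/
noncomputable def varianceJacobian (x : Fin n → Fin m → ℝ) (w : Fin n → ℝ) :
    Matrix (Fin n) (Fin n) ℝ :=
  diagonal (covKernel x w).diag - diagonal w * (covKernel x w ⊙ covKernel x w)

lemma hasFDerivAt_Talg (hM : IsUnit (Mmat x w).det) (α : ℝ) :
    HasFDerivAt (Talg x α) (LinearMap.toContinuousLinearMap
      (toLin' ((m - α : ℝ)⁻¹ • (varianceJacobian x w - α • 1)))) w := by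
  refine hasFDerivAt_pi'.mpr fun i => ?_
  have hcoord : HasFDerivAt (fun v : Fin n → ℝ => v i) (ContinuousLinearMap.proj (R := ℝ) i) w :=
    hasFDerivAt_apply i w
  have hvar := hasFDerivAt_pi'.mp (hasFDerivAt_diag_covKernel hM) i
  have hprod := (hcoord.mul (hvar.sub_const α)).mul_const (m - α : ℝ)⁻¹
  convert! hprod using 1
  · ext1 v
    simp only [Talg, diag_apply, covKernel_apply, div_eq_mul_inv]
    rfl
  · ext1 v
    have hJv : (((m - α : ℝ)⁻¹ • (varianceJacobian x w - α • 1)) *ᵥ v) i = (m - α : ℝ)⁻¹ *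
        (covKernel x w i i * v i - w i * ((covKernel x w ⊙ covKernel x w) *ᵥ v) i - α * v i) := by
      simp only [varianceJacobian, smul_mulVec, sub_mulVec, one_mulVec, ← mulVec_mulVec,
        Pi.smul_apply, Pi.sub_apply, mulVec_diagonal, diag_apply, smul_eq_mul]
    change (((m - α : ℝ)⁻¹ • (varianceJacobian x w - α • 1)) *ᵥ v) i = (m - α : ℝ)⁻¹ *
      (w i * -((covKernel x w ⊙ covKernel x w) *ᵥ v) i + (covKernel x w i i - α) * v i)
    rw [hJv]
    ring

lemma hasEigenvalue_varianceJacobian (hM : IsUnit (Mmat x w).det) {α : ℝ} (hα : α ≠ m)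
    {R : Matrix (Fin n) (Fin n) ℝ}
    (hR : HasFDerivAt (Talg x α) (LinearMap.toContinuousLinearMap (toLin' R)) w) {μ : ℂ}
    (hμ : Module.End.HasEigenvalue (toLin' (R.map ((↑) : ℝ → ℂ))) μ) :
    Module.End.HasEigenvalue (toLin' ((varianceJacobian x w).map ((↑) : ℝ → ℂ)))
      ((m - α) * μ + α) := by
  have hRJ : R = (m - α : ℝ)⁻¹ • (varianceJacobian x w - α • 1) :=
    toLin'.injective (LinearMap.toContinuousLinearMap.injective (hR.unique (hasFDerivAt_Talg hM α)))
  have hJR : varianceJacobian x w = (m - α : ℝ) • R + α • 1 := by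
    rw [hRJ, smul_inv_smul₀ (sub_ne_zero.mpr hα.symm), sub_add_cancel]
  have hJR_map : (varianceJacobian x w).map ((↑) : ℝ → ℂ) =
      (m - α : ℂ) • R.map (↑) + (α : ℂ) • 1 := by
    ext i j
    rcases eq_or_ne i j with rfl | hij
    · simp [hJR]
    · simp [hJR, hij]
  exact hJR_map ▸ hasEigenvalue_toLin'_smul_add_smul_one hμ _ _

lemma varianceJacobian_mul_diagonal (hM : IsUnit (Mmat x w).det) :
    varianceJacobian x w * diagonal w =
      diagonal ((diagonal w * (covKernel x w ⊙ covKernel x w) * diagonal w) *ᵥ 1) -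
        diagonal w * (covKernel x w ⊙ covKernel x w) * diagonal w := by
  have hrow : (diagonal w * (covKernel x w ⊙ covKernel x w) * diagonal w) *ᵥ 1 =
      w * (covKernel x w).diag := by
    have hw_one : diagonal w *ᵥ 1 = w := by
      ext i
      simp [mulVec_diagonal]
    rw [← mulVec_mulVec, ← mulVec_mulVec, hw_one, hadamard_covKernel_mulVec_self hM]
    ext i
    simp [mulVec_diagonal]
  rw [hrow, varianceJacobian, Matrix.sub_mul, diagonal_mul_diagonal]
  congr! 2
  ext i
  exact mul_comm _ _

lemma weighted_hadamard_posSemidef (hw : 0 ≤ w) :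
    (diagonal w * (covKernel x w ⊙ covKernel x w) * diagonal w).PosSemidef := by
  have h := ((covKernel_posSemidef (x := x) hw).hadamard
    (covKernel_posSemidef (x := x) hw)).mul_mul_conjTranspose_same (diagonal w)
  rwa [conjTranspose_eq_transpose_of_trivial, diagonal_transpose] at h

lemma varianceJacobian_mul_diagonal_posSemidef (hw : 0 ≤ w) (hM : IsUnit (Mmat x w).det) :
    (varianceJacobian x w * diagonal w).PosSemidef := by
  rw [varianceJacobian_mul_diagonal hM]
  refine posSemidef_diagonal_rowSum_sub (weighted_hadamard_posSemidef hw).isHermitian fun i j => ?_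
  rw [mul_diagonal, diagonal_mul, hadamard_apply]
  exact mul_nonneg (mul_nonneg (hw i) (mul_self_nonneg _)) (hw j)

lemma smul_diagonal_sub_varianceJacobian_mul_posSemidef {c : ℝ} (hw : 0 ≤ w)
    (hc : ∀ i, covKernel x w i i ≤ c) :
    (c • diagonal w - varianceJacobian x w * diagonal w).PosSemidef := by
  have hsplit : c • diagonal w - varianceJacobian x w * diagonal w =
      diagonal (fun i => (c - covKernel x w i i) * w i) +
        diagonal w * (covKernel x w ⊙ covKernel x w) * diagonal w := by
    have hdiag : c • diagonal w - diagonal (covKernel x w).diag * diagonal w =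
        diagonal (fun i => (c - covKernel x w i i) * w i) := by
      rw [diagonal_mul_diagonal, ← diagonal_smul, diagonal_sub]
      congr! 2 with i
      simp [sub_mul]
    rw [varianceJacobian, Matrix.sub_mul, ← hdiag]
    abel
  rw [hsplit]
  exact (PosSemidef.diagonal fun i => mul_nonneg (sub_nonneg.mpr (hc i)) (hw i)).add
    (weighted_hadamard_posSemidef hw)

lemma eigenvalue_varianceJacobian_mem_Icc {c : ℝ} (hw : 0 ≤ w) (hM : IsUnit (Mmat x w).det)
    (hc : ∀ i, covKernel x w i i ≤ c) {ν : ℂ}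
    (hν : Module.End.HasEigenvalue (toLin' ((varianceJacobian x w).map ((↑) : ℝ → ℂ))) ν) :
    ∃ r : ℝ, ν = r ∧ r ∈ Set.Icc 0 c := by
  obtain ⟨v, hv⟩ := hν.exists_hasEigenvector
  have hJv : (varianceJacobian x w).map ((↑) : ℝ → ℂ) *ᵥ v = ν • v := hv.apply_eq_smul
  by_cases hsupp : ∀ i, w i = 0 → v i = 0
  · exact mem_Icc_of_posSemidef_mul_diagonal hw (varianceJacobian_mul_diagonal_posSemidef hw hM)
      (smul_diagonal_sub_varianceJacobian_mul_posSemidef hw hc) hv.2 hsupp hJv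
  · -- Where `w i = 0`, row `i` of the Jacobian is `H i i` times the `i`-th unit vector.
    push Not at hsupp
    obtain ⟨i, hwi, hvi⟩ := hsupp
    have hrow : covKernel x w i i * v i = ν * v i := by
      simpa [varianceJacobian, mulVec, dotProduct, diagonal_apply, hwi, ite_mul, apply_ite]
        using congrFun hJv i
    exact ⟨covKernel x w i i, (mul_right_cancel₀ hvi hrow).symm,
      (covKernel_posSemidef hw).diag_nonneg, hc i⟩

lemma det_Mmat_add_single (hM : IsUnit (Mmat x w).det) (j : Fin n) (t : ℝ) :
    (Mmat x (w + Pi.single j t)).det = (Mmat x w).det * (1 + t * covKernel x w j j) := by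
  rw [Mmat_add_single, ← smul_vecMulVec, vecMulVec_eq Unit,
    det_add_replicateCol_mul_replicateRow hM, det_unique (n := Unit),
    Matrix.add_apply, one_apply_eq, Matrix.mul_assoc, ← replicateCol_mulVec,
    replicateRow_mul_replicateCol_apply, mulVec_smul, dotProduct_smul, smul_eq_mul, covKernel_apply]

lemma inv_smul_add_single_mem_stdSimplex (hw : w ∈ stdSimplex ℝ (Fin n)) (j : Fin n) {t : ℝ}
    (ht : 0 ≤ t) : (1 + t)⁻¹ • (w + Pi.single j t) ∈ stdSimplex ℝ (Fin n) := by
  have hsingle : (0 : Fin n → ℝ) ≤ Pi.single j t := Pi.single_nonneg.mpr ht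
  refine ⟨fun k => ?_, ?_⟩
  · exact mul_nonneg (by positivity) (add_nonneg (hw.1 k) (hsingle k))
  · simp only [Pi.smul_apply, Pi.add_apply, smul_eq_mul, ← Finset.mul_sum, Finset.sum_add_distrib,
      hw.2, Finset.sum_pi_single', Finset.mem_univ, if_true]
    exact inv_mul_cancel₀ (by positivity)

lemma one_add_mul_covKernel_le_pow (hw : w ∈ stdSimplex ℝ (Fin n))
    (hmax : IsMaxOn (fun v => (Mmat x v).det) (stdSimplex ℝ (Fin n)) w)
    (hdet : 0 < (Mmat x w).det) (j : Fin n) {t : ℝ} (ht : 0 ≤ t) :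
    1 + t * covKernel x w j j ≤ (1 + t) ^ m := by
  have hle : (Mmat x ((1 + t)⁻¹ • (w + Pi.single j t))).det ≤ (Mmat x w).det :=
    hmax (inv_smul_add_single_mem_stdSimplex hw j ht)
  rw [Mmat_smul, det_smul, Fintype.card_fin, det_Mmat_add_single hdet.ne'.isUnit,
    inv_pow, inv_mul_le_iff₀ (by positivity), mul_comm ((1 + t) ^ m)] at hle
  exact le_of_mul_le_mul_left hle hdet

lemma covKernel_self_le_of_isMaxOn (hw : w ∈ stdSimplex ℝ (Fin n))
    (hmax : IsMaxOn (fun v => (Mmat x v).det) (stdSimplex ℝ (Fin n)) w)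
    (hdet : 0 < (Mmat x w).det) (j : Fin n) : covKernel x w j j ≤ m := by
  have hderiv : HasDerivAt (fun t : ℝ => (1 + t) ^ m) m 0 := by
    simpa using ((hasDerivAt_id (0 : ℝ)).const_add 1).fun_pow m
  refine ge_of_tendsto hderiv.tendsto_slope_zero_right ?_
  filter_upwards [self_mem_nhdsWithin] with t (ht : 0 < t)
  have hpow := one_add_mul_covKernel_le_pow hw hmax hdet j ht.le
  rw [zero_add, add_zero, one_pow, smul_eq_mul, le_inv_mul_iff₀ ht]
  linarith

lemma det_Mmat_pos_of_isMaxOn (hrank : (Matrix.of x).rank = m) (hw : w ∈ stdSimplex ℝ (Fin n))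
    (hmax : IsMaxOn (fun v => (Mmat x v).det) (stdSimplex ℝ (Fin n)) w) :
    0 < (Mmat x w).det := by
  have : Nonempty (Fin n) := by
    by_contra hempty
    rw [not_nonempty_iff] at hempty
    simpa using hw.2
  let uniform : Fin n → ℝ := fun _ => (n : ℝ)⁻¹
  have hn : 0 < (n : ℝ) := by exact_mod_cast Fin.pos_iff_nonempty.mpr this
  have hpos : ∀ i, 0 < uniform i := fun _ => inv_pos.mpr hn
  have huniform : uniform ∈ stdSimplex ℝ (Fin n) :=
    ⟨fun i => (hpos i).le, by simp [uniform, hn.ne']⟩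
  exact (Mmat_posDef hrank hpos).det_pos.trans_le (hmax huniform)

end Design

theorem stmt_5_general {n m : ℕ} {x : Fin n → Fin m → ℝ} (hrank : (Matrix.of x).rank = m)
    {w : Fin n → ℝ} (hw : w ∈ stdSimplex ℝ (Fin n))
    (hmax : IsMaxOn (fun v => (Mmat x v).det) (stdSimplex ℝ (Fin n)) w)
    {α : ℝ} (hα : α < m) {R : Matrix (Fin n) (Fin n) ℝ}
    (hR : HasFDerivAt (Talg x α) (LinearMap.toContinuousLinearMap (toLin' R)) w) {μ : ℂ}
    (hμ : Module.End.HasEigenvalue (toLin' (R.map (Complex.ofReal : ℝ → ℂ))) μ) :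
    ∃ r : ℝ, μ = r ∧ r ∈ Set.Icc (-α / (m - α)) 1 := by
  have hdet := det_Mmat_pos_of_isMaxOn hrank hw hmax
  have hmα : (0 : ℝ) < m - α := sub_pos.mpr hα
  have hν := hasEigenvalue_varianceJacobian hdet.ne'.isUnit hα.ne hR hμ
  obtain ⟨r, hr, hr₀, hrm⟩ := eigenvalue_varianceJacobian_mem_Icc hw.1 hdet.ne'.isUnit
    (covKernel_self_le_of_isMaxOn hw hmax hdet) hν
  refine ⟨(r - α) / (m - α), ?_, ?_, ?_⟩
  · have hmα_complex : (m - α : ℂ) ≠ 0 := by exact_mod_cast hmα.ne'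
    push_cast
    rw [eq_div_iff hmα_complex, ← hr]
    ring
  · gcongr
    linarith
  · rw [div_le_one hmα]
    linarith

/-- Eigenvalue bound for Algorithm I's matrix rate: if the design matrix has full rank
`m ≥ 2` and `w*` is an interior global maximizer of `det M` over the closed simplex, then
all eigenvalues of `R(0)`, the Jacobian at `w*` of the Algorithm I map
`T_0(w)_i = w_i (x_iᵀ M(w)⁻¹ x_i)/m`, are real and lie in the interval `[0, 1]`. -/
theorem stmt_5 {n m : ℕ} (hm : 2 ≤ m) (hnm : m ≤ n)
    (x : Fin n → Fin m → ℝ) (hrank : (Matrix.of x).rank = m)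
    (wstar : Fin n → ℝ) (hpos : ∀ i, 0 < wstar i) (hsum : ∑ i, wstar i = 1)
    (hopt : ∀ v : Fin n → ℝ, (∀ i, 0 ≤ v i) → ∑ i, v i = 1 →
      (Mmat x v).det ≤ (Mmat x wstar).det)
    (R : Matrix (Fin n) (Fin n) ℝ)
    (hR : HasFDerivAt (Talg x 0)
      (LinearMap.toContinuousLinearMap (Matrix.toLin' R)) wstar) :
    ∀ μ : ℂ, Module.End.HasEigenvalue
        (Matrix.toLin' (R.map (Complex.ofReal : ℝ → ℂ))) μ →
      ∃ r : ℝ, μ = (r : ℂ) ∧ r ∈ Set.Icc (0 : ℝ) 1 := by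
  intro μ hμ
  simpa using stmt_5_general hrank ⟨fun i => (hpos i).le, hsum⟩ (fun v hv => hopt v hv.1 hv.2)
    (by positivity : (0 : ℝ) < m) hR hμ
end

section
/- Global rate comparison: assume 0 ≤ α < m, X has full rank m ≥ 2, and w* ∈ Ω is a global maximizer of det M(w) over Ω̄ with all coordinates positive. If r(0) ≥ 2α/m, then 1 − r(α) = (m/(m − α))·(1 − r(0)), and consequently r(α) ≤ r(0). -/
open Matrix Filter

/-- The coordinate-sum linear functional on `ℂⁿ`. -/
noncomputable def sumLM (n : ℕ) : (Fin n → ℂ) →ₗ[ℂ] ℂ where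
  toFun γ := ∑ i, γ i
  map_add' a b := by simp [Finset.sum_add_distrib]
  map_smul' c a := by simp [Finset.mul_sum]

/-- The zero-sum subspace `Γ = {γ : ∑ i, γ_i = 0}` (complexified). -/
noncomputable def Gam (n : ℕ) : Submodule ℂ (Fin n → ℂ) := LinearMap.ker (sumLM n)

/-- The global rate of convergence: the spectral radius of the matrix `R`, viewed (after
complexification) as a linear map restricted to the zero-sum subspace `Γ`. -/
noncomputable def globalRate {n : ℕ} (R : Matrix (Fin n) (Fin n) ℝ)
    (h : ∀ γ ∈ Gam n, Matrix.toLin' (R.map (Complex.ofReal : ℝ → ℂ)) γ ∈ Gam n) : ℝ :=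
  sSup ((fun μ : ℂ => ‖μ‖) ''
    spectrum ℂ ((Matrix.toLin' (R.map (Complex.ofReal : ℝ → ℂ))).restrict h))

/-!
Let `G` be the matrix with entries `x_iᵀ M(w*)⁻¹ x_j`. Stationarity of `det M` along the segments
from `w*` towards the vertices of the simplex forces `G_ii = m` for all `i`; the Jacobian of `T_α`
at `w*` is then `1 - K / (m - α)` with `K = diag(w*) (G ⊙ G)` independent of `α`. Since
`0 ≤ G ≤ diag(w*)⁻¹`, the Schur product theorem gives `0 ≤ G ⊙ G ≤ G ⊙ diag(w*)⁻¹ = m diag(w*)⁻¹`,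
so the spectrum of `K` lies in `[0, m]`. Let `κ` be the least eigenvalue of `K` on `Γ`. The spectral
radius of `1 - t K` on `Γ` is `1 - t κ` as soon as `t (κ + m) ≤ 2`. For `t = 1 / m` this always
holds, so `r(0) = 1 - κ / m`; for `t = 1 / (m - α)` it says `κ ≤ m - 2 α`, which is exactly the
assumption `r(0) ≥ 2 α / m`.
-/

section Spectral

open scoped ComplexOrder MatrixOrder

lemma posSemidef_map_ofReal_s7 {ι : Type*} [Finite ι] {S : Matrix ι ι ℝ} (hS : S.PosSemidef) :
    (S.map (Complex.ofReal : ℝ → ℂ)).PosSemidef := by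
  classical
  have := Fintype.ofFinite ι
  obtain ⟨B, rfl⟩ := CStarAlgebra.nonneg_iff_eq_star_mul_self.mp hS.nonneg
  have hmap : (star B * B).map (Complex.ofReal : ℝ → ℂ) =
      (B.map Complex.ofReal)ᴴ * B.map Complex.ofReal := by
    ext i j
    simp [Matrix.mul_apply]
  rw [hmap]
  exact posSemidef_conjTranspose_mul_self _

lemma map_ofReal_one_sub_smul {ι : Type*} [DecidableEq ι] (K : Matrix ι ι ℝ) (t : ℝ) :
    (1 - t • K).map (Complex.ofReal : ℝ → ℂ) = 1 - (t : ℂ) • K.map Complex.ofReal := by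
  ext i j
  simp [one_apply, apply_ite Complex.ofReal]

lemma mem_Icc_of_mulVec_eq_smul_mulVec_s7 {ι : Type*} [Fintype ι]
    {S N : Matrix ι ι ℂ} {c μ : ℂ} {v : ι → ℂ} (hS : S.PosSemidef) (hN : N.PosDef)
    (hSN : (c • N - S).PosSemidef) (hv : v ≠ 0) (hμ : S *ᵥ v = μ • N *ᵥ v) :
    μ ∈ Set.Icc 0 c := by
  have hq : 0 < star v ⬝ᵥ N *ᵥ v := hN.dotProduct_mulVec_pos hv
  have h0 : 0 ≤ μ * (star v ⬝ᵥ N *ᵥ v) := by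
    simpa only [hμ, dotProduct_smul, smul_eq_mul] using hS.dotProduct_mulVec_nonneg v
  have hc : 0 ≤ (c - μ) * (star v ⬝ᵥ N *ᵥ v) := by
    simpa only [sub_mulVec, smul_mulVec, hμ, dotProduct_sub, dotProduct_smul, smul_eq_mul,
      ← sub_mul] using hSN.dotProduct_mulVec_nonneg v
  exact ⟨le_of_mul_le_mul_right (by rwa [zero_mul]) hq,
    le_of_mul_le_mul_right (by rwa [← sub_nonneg, ← sub_mul]) hq⟩

lemma spectrum_map_diagonal_mul_subset_Icc {ι : Type*} [Fintype ι] [DecidableEq ι]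
    {S : Matrix ι ι ℝ} {w : ι → ℝ} {c : ℝ} (hw : ∀ i, 0 < w i) (hS : S.PosSemidef)
    (hSc : (c • diagonal w⁻¹ - S).PosSemidef) :
    spectrum ℂ ((diagonal w * S).map (Complex.ofReal : ℝ → ℂ)) ⊆ Set.Icc 0 (c : ℂ) := by
  intro μ hμ
  rw [← Matrix.spectrum_toLin', ← Module.End.hasEigenvalue_iff_mem_spectrum] at hμ
  obtain ⟨v, hv⟩ := hμ.exists_hasEigenvector
  have hN : (diagonal fun i => ((w i)⁻¹ : ℂ)).PosDef :=
    .diagonal fun i => by exact_mod_cast inv_pos.2 (hw i)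
  have hNS : (c • diagonal w⁻¹ - S).map (Complex.ofReal : ℝ → ℂ) =
      (c : ℂ) • diagonal (fun i => ((w i)⁻¹ : ℂ)) - S.map Complex.ofReal := by
    ext i j
    by_cases hij : i = j <;> simp [hij]
  refine mem_Icc_of_mulVec_eq_smul_mulVec_s7 (posSemidef_map_ofReal_s7 hS) hN
    (hNS ▸ posSemidef_map_ofReal_s7 hSc) hv.2 ?_
  funext i
  have hi : (w i : ℂ) ≠ 0 := by exact_mod_cast (hw i).ne'
  have hvi := congrFun hv.apply_eq_smul i
  simp only [toLin'_apply, mulVec, dotProduct, map_apply, diagonal_mul, Complex.ofReal_mul,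
    mul_assoc, ← Finset.mul_sum, Pi.smul_apply, smul_eq_mul] at hvi
  rw [Pi.smul_apply, mulVec_diagonal, smul_eq_mul, mul_left_comm, ← hvi, inv_mul_cancel_left₀ hi]
  rfl

lemma spectrum_restrict_subset {𝕜 V : Type*} [Field 𝕜] [AddCommGroup V] [Module 𝕜 V]
    [FiniteDimensional 𝕜 V] (f : Module.End 𝕜 V) {p : Submodule 𝕜 V} (hp : ∀ v ∈ p, f v ∈ p) :
    spectrum 𝕜 (f.restrict hp) ⊆ spectrum 𝕜 f := by
  intro μ hμ
  rw [← Module.End.hasEigenvalue_iff_mem_spectrum] at hμ ⊢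
  obtain ⟨v, hv⟩ := hμ.exists_hasEigenvector
  refine Module.End.hasEigenvalue_of_hasEigenvector (x := (v : V)) ?_
  exact ⟨Module.End.mem_eigenspace_iff.2 (congrArg Subtype.val hv.apply_eq_smul),
    fun h => hv.2 (Subtype.ext h)⟩

lemma exists_isLeast_of_im_eq_zero {s : Set ℂ} (hfin : s.Finite) (hne : s.Nonempty)
    (him : ∀ z ∈ s, z.im = 0) : ∃ κ : ℝ, IsLeast s (κ : ℂ) := by
  obtain ⟨z, hz, hmin⟩ := Set.exists_min_image s Complex.re hfin hne
  have hzre : (z.re : ℂ) = z := Complex.ext rfl (him z hz).symm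
  refine ⟨z.re, hzre ▸ hz, fun y hy => ?_⟩
  rw [hzre]
  exact Complex.le_def.2 ⟨hmin y hy, by rw [him z hz, him y hy]⟩

lemma spectrum_one_sub_smul {𝕜 A : Type*} [Field 𝕜] [Ring A] [Algebra 𝕜 A]
    {a : A} (ha : (spectrum 𝕜 a).Nonempty) (t : 𝕜) :
    spectrum 𝕜 (1 - t • a) = (fun z => 1 - t * z) '' spectrum 𝕜 a := by
  have : Nontrivial A := by
    by_contra h
    rw [not_nontrivial_iff_subsingleton] at h
    exact ha.ne_empty (spectrum.of_subsingleton a)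
  rw [← map_one (algebraMap 𝕜 A), ← spectrum.singleton_sub_eq, spectrum.smul_eq_smul _ _ ha,
    Set.singleton_sub, ← Set.image_smul, Set.image_image]
  rfl

lemma isGreatest_norm_spectrum_one_sub_smul {A : Type*} [Ring A] [Algebra ℂ A]
    {a : A} {κ b t : ℝ} (hκ : IsLeast (spectrum ℂ a) (κ : ℂ))
    (hb : (b : ℂ) ∈ upperBounds (spectrum ℂ a)) (ht : 0 ≤ t) (htκ : t * (κ + b) ≤ 2) :
    IsGreatest ((fun z : ℂ => ‖z‖) '' spectrum ℂ (1 - (t : ℂ) • a)) (1 - t * κ) := by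
  have norm_eq (s : ℝ) : ‖1 - (t : ℂ) * s‖ = |1 - t * s| := by
    rw [← Real.norm_eq_abs, ← Complex.norm_real]
    push_cast
    rfl
  have hκb : κ ≤ b := Complex.real_le_real.1 (hb hκ.1)
  rw [spectrum_one_sub_smul ⟨_, hκ.1⟩, Set.image_image]
  refine ⟨⟨κ, hκ.1, ?_⟩, ?_⟩
  · have htκb : t * κ ≤ t * b := by gcongr
    change ‖1 - (t : ℂ) * κ‖ = 1 - t * κ
    rw [norm_eq, abs_of_nonneg (by linarith)]
  · rintro _ ⟨z, hz, rfl⟩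
    obtain ⟨s, rfl⟩ : ∃ s : ℝ, (s : ℂ) = z :=
      ⟨z.re, Complex.ext rfl (Complex.le_def.1 (hκ.2 hz)).2⟩
    have hκs : t * κ ≤ t * s := mul_le_mul_of_nonneg_left (Complex.real_le_real.1 (hκ.2 hz)) ht
    have hsb : t * s ≤ t * b := mul_le_mul_of_nonneg_left (Complex.real_le_real.1 (hb hz)) ht
    change ‖1 - (t : ℂ) * s‖ ≤ 1 - t * κ
    rw [norm_eq, abs_le]
    constructor <;> linarith

end Spectral

section LineDerivatives

variable {ι 𝕜 : Type*} [Fintype ι] [DecidableEq ι]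

lemma hasLineDerivAt_det [NontriviallyNormedField 𝕜] {A : Matrix ι ι 𝕜} (hA : IsUnit A.det)
    (B : Matrix ι ι 𝕜) : HasLineDerivAt 𝕜 det (A.det * (A⁻¹ * B).trace) A B := by
  set q := (det (1 + (Polynomial.X : Polynomial 𝕜) • (A⁻¹ * B).map Polynomial.C)).divX.divX
  have hdet : (fun t : 𝕜 => (A + t • B).det) =
      fun t => A.det * (1 + (A⁻¹ * B).trace * t + q.eval t * t ^ 2) := by
    funext t
    rw [← det_one_add_smul, ← det_mul, mul_add, mul_one, mul_smul_comm,
      mul_nonsing_inv_cancel_left _ _ hA]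
  have hlin : HasDerivAt (fun t : 𝕜 => 1 + (A⁻¹ * B).trace * t) (A⁻¹ * B).trace 0 := by
    simpa using ((hasDerivAt_id (0 : 𝕜)).const_mul (A⁻¹ * B).trace).const_add 1
  have hquad : HasDerivAt (fun t : 𝕜 => q.eval t * t ^ 2) 0 0 := by
    simpa using! (q.hasDerivAt 0).mul (hasDerivAt_pow 2 (0 : 𝕜))
  rw [HasLineDerivAt, hdet]
  simpa using! (hlin.add hquad).const_mul A.det

open scoped Matrix.Norms.Operator in
lemma hasLineDerivAt_nonsing_inv [RCLike 𝕜] {A : Matrix ι ι 𝕜} (hA : IsUnit A.det)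
    (B : Matrix ι ι 𝕜) :
    HasLineDerivAt 𝕜 (fun C : Matrix ι ι 𝕜 => C⁻¹) (-(A⁻¹ * B * A⁻¹)) A B := by
  obtain ⟨u, rfl⟩ := (isUnit_iff_isUnit_det A).2 hA
  have hinv : (fun C : Matrix ι ι 𝕜 => C⁻¹) = Ring.inverse := funext nonsing_inv_eq_ringInverse
  have hderiv := (hasFDerivAt_ringInverse (𝕜 := 𝕜) u).hasLineDerivAt B
  rwa [_root_.neg_apply, ContinuousLinearMap.mulLeftRight_apply, coe_units_inv, ← hinv] at hderiv

end LineDerivatives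

lemma tendsto_add_smul_nhdsWithin_stdSimplex {ι : Type*} [Fintype ι] {w u : ι → ℝ}
    (hw : ∀ i, 0 < w i) (hw1 : ∑ i, w i = 1) (hu : ∑ i, u i = 0) :
    Tendsto (fun t : ℝ => w + t • u) (nhds 0) (nhdsWithin w (stdSimplex ℝ ι)) := by
  have hcont : Tendsto (fun t : ℝ => w + t • u) (nhds 0) (nhds w) := by
    have : Continuous fun t : ℝ => w + t • u := by fun_prop
    simpa using this.tendsto 0
  refine tendsto_nhdsWithin_iff.2 ⟨hcont, ?_⟩
  have hpos : ∀ᶠ t : ℝ in nhds 0, ∀ i, 0 < (w + t • u) i :=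
    eventually_all.2 fun i => (tendsto_pi_nhds.1 hcont i).eventually_const_lt (hw i)
  filter_upwards [hpos] with t ht
  exact ⟨fun i => (ht i).le, by simp [Finset.sum_add_distrib, ← Finset.mul_sum, hw1, hu]⟩

section Rate

open scoped ComplexOrder

variable {n : ℕ} {K : Matrix (Fin n) (Fin n) ℝ}

lemma toLin'_map_ofReal_mem_Gam {c : ℝ} (hK : ∀ j, ∑ i, K i j = c) :
    ∀ γ ∈ Gam n, toLin' (K.map (Complex.ofReal : ℝ → ℂ)) γ ∈ Gam n := by
  intro γ (hγ : ∑ j, γ j = 0)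
  change ∑ i, ∑ j, (K i j : ℂ) * γ j = 0
  rw [Finset.sum_comm]
  simp only [← Finset.sum_mul, ← Complex.ofReal_sum, hK, ← Finset.mul_sum, hγ, mul_zero]

lemma nontrivial_Gam (hn : 2 ≤ n) : Nontrivial (Gam n) := by
  have := Fin.nontrivial_iff_two_le.2 hn
  obtain ⟨i, j, hij⟩ := exists_pair_ne (Fin n)
  have hmem : Pi.single i 1 - Pi.single j 1 ∈ Gam n := by
    simp [Gam, sumLM]
  refine nontrivial_of_ne (⟨_, hmem⟩ : Gam n) 0 fun h => ?_
  simpa [hij] using congrFun (congrArg Subtype.val h) i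

lemma exists_globalRate_one_sub_smul_eq {b : ℝ} (hn : 2 ≤ n)
    (hK : ∀ γ ∈ Gam n, toLin' (K.map (Complex.ofReal : ℝ → ℂ)) γ ∈ Gam n)
    (hspec : spectrum ℂ (K.map (Complex.ofReal : ℝ → ℂ)) ⊆ Set.Icc 0 (b : ℂ)) :
    ∃ κ ∈ Set.Icc 0 b, ∀ t : ℝ, 0 ≤ t → t * (κ + b) ≤ 2 → ∀ h,
      globalRate (1 - t • K) h = 1 - t * κ := by
  have := nontrivial_Gam hn
  set k := (toLin' (K.map (Complex.ofReal : ℝ → ℂ))).restrict hK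
  have hk : spectrum ℂ k ⊆ Set.Icc 0 (b : ℂ) :=
    (spectrum_restrict_subset _ hK).trans (spectrum_toLin' (K.map Complex.ofReal) ▸ hspec)
  obtain ⟨κ, hκ⟩ := exists_isLeast_of_im_eq_zero (Module.End.finite_spectrum k)
    (spectrum.nonempty_of_isAlgClosed_of_finiteDimensional ℂ k)
    fun z hz => (Complex.le_def.1 (hk hz).1).2.symm
  have hκ_mem : κ ∈ Set.Icc 0 b := by
    simpa only [Set.mem_Icc, Complex.zero_le_real, Complex.real_le_real] using hk hκ.1
  refine ⟨κ, hκ_mem, fun t ht htκ h => ?_⟩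
  have hrestrict : (toLin' ((1 - t • K).map (Complex.ofReal : ℝ → ℂ))).restrict h =
      1 - (t : ℂ) • k := by
    ext1 γ
    apply Subtype.ext
    simp [k, map_ofReal_one_sub_smul, smul_mulVec]
  rw [globalRate, hrestrict]
  exact (isGreatest_norm_spectrum_one_sub_smul hκ (fun z hz => (hk hz).2) ht htκ).csSup_eq

end Rate

/-- The dispersion kernel `x_iᵀ M(w)⁻¹ x_j` of a design `w`, as a matrix indexed by pairs of
design points. -/
noncomputable def dispersion {n m : ℕ} (x : Fin n → Fin m → ℝ) (w : Fin n → ℝ) :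
    Matrix (Fin n) (Fin n) ℝ :=
  of x * (Mmat x w)⁻¹ * (of x)ᵀ

/-- The matrix `K` with entries `w_i (x_iᵀ M(w)⁻¹ x_j)²`, which does not involve `α`: when the
diagonal of `dispersion x w` is constantly `m`, the Jacobian of `T_α` at `w` is
`1 - (m - α)⁻¹ • K`. -/
noncomputable def rateMatrix {n m : ℕ} (x : Fin n → Fin m → ℝ) (w : Fin n → ℝ) :
    Matrix (Fin n) (Fin n) ℝ :=
  diagonal w * (dispersion x w ⊙ dispersion x w)

section Design

variable {n m : ℕ} {x : Fin n → Fin m → ℝ} {w : Fin n → ℝ}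

lemma Mmat_eq_mul (x : Fin n → Fin m → ℝ) (w : Fin n → ℝ) :
    Mmat x w = (of x)ᵀ * diagonal w * of x := by
  ext i j
  simp only [Mmat, Matrix.sum_apply, Matrix.smul_apply, vecMulVec_apply, smul_eq_mul,
    mul_apply (M := _ * _), mul_diagonal, transpose_apply, of_apply]
  exact Finset.sum_congr rfl fun k _ => by ring

lemma Mmat_add_smul (x : Fin n → Fin m → ℝ) (w u : Fin n → ℝ) (t : ℝ) :
    Mmat x (w + t • u) = Mmat x w + t • Mmat x u := by
  simp [Mmat, add_smul, mul_smul, Finset.sum_add_distrib, Finset.smul_sum]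

lemma isHermitian_Mmat (x : Fin n → Fin m → ℝ) (w : Fin n → ℝ) : (Mmat x w).IsHermitian := by
  rw [Mmat_eq_mul, ← conjTranspose_eq_transpose_of_trivial]
  exact isHermitian_conjTranspose_mul_mul _ (isHermitian_diagonal w)

lemma posDef_Mmat (hrank : (of x).rank = m) (hw : ∀ i, 0 < w i) : (Mmat x w).PosDef := by
  have hinj : Function.Injective (of x).mulVec := by
    rw [mulVec_injective_iff, linearIndependent_iff_card_eq_finrank_span, Fintype.card_fin]
    exact hrank.symm.trans (rank_eq_finrank_span_cols _)
  rw [Mmat_eq_mul, ← conjTranspose_eq_transpose_of_trivial]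
  exact (PosDef.diagonal hw).conjTranspose_mul_mul_same hinj

lemma dispersion_apply (x : Fin n → Fin m → ℝ) (w : Fin n → ℝ) (i j : Fin n) :
    dispersion x w i j = x i ⬝ᵥ (Mmat x w)⁻¹ *ᵥ x j := by
  rw [dispersion, Matrix.mul_assoc]
  rfl

lemma isHermitian_dispersion (x : Fin n → Fin m → ℝ) (w : Fin n → ℝ) :
    (dispersion x w).IsHermitian :=
  isHermitian_mul_mul_conjTranspose (of x) (isHermitian_Mmat x w).inv

lemma dispersion_comm (x : Fin n → Fin m → ℝ) (w : Fin n → ℝ) (i j : Fin n) :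
    dispersion x w i j = dispersion x w j i :=
  (isHermitian_dispersion x w).apply j i

lemma dispersion_mul_diagonal_mul_dispersion (hM : IsUnit (Mmat x w).det) :
    dispersion x w * diagonal w * dispersion x w = dispersion x w := by
  calc dispersion x w * diagonal w * dispersion x w
      = of x * ((Mmat x w)⁻¹ * ((of x)ᵀ * diagonal w * of x) * (Mmat x w)⁻¹) * (of x)ᵀ := by
        simp only [dispersion, Matrix.mul_assoc]
    _ = dispersion x w := by
        rw [← Mmat_eq_mul, nonsing_inv_mul _ hM, Matrix.one_mul, dispersion]

lemma posSemidef_dispersion (hM : (Mmat x w).PosSemidef) : (dispersion x w).PosSemidef :=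
  hM.inv.mul_mul_conjTranspose_same (of x)

lemma posSemidef_diagonal_inv_sub_dispersion (hw : ∀ i, 0 < w i)
    (hM : IsUnit (Mmat x w).det) : (diagonal w⁻¹ - dispersion x w).PosSemidef := by
  set G := dispersion x w
  set D := diagonal w
  have hGDG : G * D * G = G := dispersion_mul_diagonal_mul_dispersion hM
  have hDinv : D * diagonal w⁻¹ = 1 := by
    rw [diagonal_mul_diagonal, ← diagonal_one]
    exact congrArg diagonal (funext fun i => mul_inv_cancel₀ (hw i).ne')
  have hstar : (1 - G * D)ᴴ = 1 - D * G := by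
    rw [conjTranspose_sub, conjTranspose_one, conjTranspose_mul, isHermitian_dispersion x w,
      isHermitian_diagonal w]
  have hfactor : diagonal w⁻¹ - G = (1 - G * D) * diagonal w⁻¹ * (1 - G * D)ᴴ := by
    calc diagonal w⁻¹ - G = (diagonal w⁻¹ - G) * (1 - D * G) := by
          rw [Matrix.sub_mul, Matrix.mul_sub, Matrix.mul_sub, ← Matrix.mul_assoc,
            ← Matrix.mul_assoc, mul_eq_one_comm.1 hDinv, hGDG, Matrix.mul_one, Matrix.mul_one,
            Matrix.one_mul, sub_self, sub_zero]
      _ = (1 - G * D) * diagonal w⁻¹ * (1 - G * D)ᴴ := by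
          rw [hstar, Matrix.sub_mul 1, Matrix.mul_assoc G, hDinv, Matrix.one_mul, Matrix.mul_one]
  rw [hfactor]
  exact (PosSemidef.diagonal fun i => (inv_pos.2 (hw i)).le).mul_mul_conjTranspose_same _

lemma trace_inv_Mmat_mul_Mmat (x : Fin n → Fin m → ℝ) (w u : Fin n → ℝ) :
    ((Mmat x w)⁻¹ * Mmat x u).trace = ∑ i, u i * dispersion x w i i := by
  rw [Mmat_eq_mul x u, ← Matrix.mul_assoc, trace_mul_comm, ← Matrix.mul_assoc, ← Matrix.mul_assoc,
    ← dispersion, trace]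
  simp only [diag_apply, mul_diagonal, mul_comm]

lemma sum_mul_dispersion_self (hM : IsUnit (Mmat x w).det) :
    ∑ i, w i * dispersion x w i i = m := by
  rw [← trace_inv_Mmat_mul_Mmat, nonsing_inv_mul _ hM, trace_one, Fintype.card_fin]

lemma hasLineDerivAt_det_Mmat (hM : IsUnit (Mmat x w).det) (u : Fin n → ℝ) :
    HasLineDerivAt ℝ (fun v => (Mmat x v).det)
      ((Mmat x w).det * ∑ i, u i * dispersion x w i i) w u := by
  have h := hasLineDerivAt_det hM (Mmat x u)
  simp only [HasLineDerivAt, ← Mmat_add_smul, trace_inv_Mmat_mul_Mmat] at h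
  exact h

lemma dispersion_self_eq_of_isLocalMaxOn (hw : ∀ i, 0 < w i) (hw1 : ∑ i, w i = 1)
    (hM : IsUnit (Mmat x w).det)
    (hmax : IsLocalMaxOn (fun v => (Mmat x v).det) (stdSimplex ℝ (Fin n)) w) (i : Fin n) :
    dispersion x w i i = m := by
  set u : Fin n → ℝ := Pi.single i 1 - w
  have hu : ∑ j, u j = 0 := by simp [u, hw1]
  have hpath : IsLocalMax (fun t : ℝ => (Mmat x (w + t • u)).det) 0 :=
    IsMaxFilter.comp_tendsto (f := fun v => (Mmat x v).det) (by simpa using! hmax)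
      (tendsto_add_smul_nhdsWithin_stdSimplex hw hw1 hu)
  have hcrit := hpath.hasDerivAt_eq_zero (hasLineDerivAt_det_Mmat hM u)
  have hsum : ∑ j, u j * dispersion x w j j = dispersion x w i i - m := by
    rw [← sum_mul_dispersion_self hM]
    simp [u, sub_mul, Pi.single_apply]
  rw [hsum] at hcrit
  exact sub_eq_zero.1 ((mul_eq_zero.1 hcrit).resolve_left hM.ne_zero)

open scoped Matrix.Norms.Operator in
lemma hasLineDerivAt_dispersion (hM : IsUnit (Mmat x w).det) (u : Fin n → ℝ) (i j : Fin n) :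
    HasLineDerivAt ℝ (fun v => dispersion x v i j)
      (-(dispersion x w * diagonal u * dispersion x w) i j) w u := by
  have hinv := hasLineDerivAt_nonsing_inv hM (Mmat x u)
  simp only [HasLineDerivAt, ← Mmat_add_smul] at hinv
  let entry : Matrix (Fin m) (Fin m) ℝ →ₗ[ℝ] ℝ :=
    entryLinearMap ℝ ℝ i j ∘ₗ mulRightLinearMap _ ℝ (of x)ᵀ ∘ₗ mulLeftLinearMap _ ℝ (of x)
  have h := (LinearMap.toContinuousLinearMap entry).hasFDerivAt.comp_hasDerivAt 0 hinv
  have hG : dispersion x w * diagonal u * dispersion x w =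
      of x * ((Mmat x w)⁻¹ * Mmat x u * (Mmat x w)⁻¹) * (of x)ᵀ := by
    simp only [dispersion, Mmat_eq_mul x u, Matrix.mul_assoc]
  have hentry : entry (-((Mmat x w)⁻¹ * Mmat x u * (Mmat x w)⁻¹)) =
      -(dispersion x w * diagonal u * dispersion x w) i j := by
    simp only [entry, LinearMap.comp_apply, mulLeftLinearMap_apply, mulRightLinearMap_apply,
      entryLinearMap_apply, hG, Matrix.mul_neg, Matrix.neg_mul, Matrix.neg_apply]
  rw [← hentry]
  exact h

lemma hasLineDerivAt_Talg (hM : IsUnit (Mmat x w).det) (α : ℝ) (u : Fin n → ℝ) (i : Fin n) :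
    HasLineDerivAt ℝ (fun v => Talg x α v i)
      ((u i * (dispersion x w i i - α) - (rateMatrix x w *ᵥ u) i) / (m - α)) w u := by
  have hcoord : HasDerivAt (fun t : ℝ => (w + t • u) i) (u i) 0 := by
    simpa using ((hasDerivAt_id (0 : ℝ)).mul_const (u i)).const_add (w i)
  have h := (hcoord.mul ((hasLineDerivAt_dispersion hM u i i).sub_const α)).div_const (m - α)
  have hK : (rateMatrix x w *ᵥ u) i =
      w i * (dispersion x w * diagonal u * dispersion x w) i i := by
    rw [rateMatrix, ← mulVec_mulVec, mulVec_diagonal, mul_apply]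
    simp only [mulVec, dotProduct, hadamard_apply, mul_diagonal, dispersion_comm x w _ i]
    congr 1
    exact Finset.sum_congr rfl fun j _ => by ring
  simp only [HasLineDerivAt, Talg, ← dispersion_apply]
  convert! h using 1
  rw [hK, zero_smul, add_zero]
  ring

lemma eq_one_sub_smul_rateMatrix_of_hasFDerivAt {α : ℝ} (hα : (m : ℝ) - α ≠ 0)
    (hM : IsUnit (Mmat x w).det) (hdiag : ∀ i, dispersion x w i i = m)
    {R : Matrix (Fin n) (Fin n) ℝ}
    (hR : HasFDerivAt (Talg x α) (LinearMap.toContinuousLinearMap (toLin' R)) w) :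
    R = 1 - ((m : ℝ) - α)⁻¹ • rateMatrix x w := by
  refine ext_of_mulVec_single fun j => funext fun i => ?_
  have h := ((hasFDerivAt_pi'.1 hR i).hasLineDerivAt (Pi.single j 1)).unique
    (hasLineDerivAt_Talg hM α (Pi.single j 1) i)
  rw [hdiag, sub_div, mul_div_cancel_right₀ _ hα] at h
  rw [sub_mulVec, one_mulVec, smul_mulVec, Pi.sub_apply, Pi.smul_apply, smul_eq_mul, inv_mul_eq_div]
  exact h

lemma sum_rateMatrix (hM : IsUnit (Mmat x w).det) (j : Fin n) :
    ∑ i, rateMatrix x w i j = dispersion x w j j := by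
  conv_rhs => rw [← dispersion_mul_diagonal_mul_dispersion hM, mul_apply]
  refine Finset.sum_congr rfl fun i _ => ?_
  rw [rateMatrix, diagonal_mul, hadamard_apply, mul_diagonal, dispersion_comm x w j i]
  ring

lemma posSemidef_smul_diagonal_inv_sub_hadamard (hw : ∀ i, 0 < w i) (hM : (Mmat x w).PosDef)
    (hdiag : ∀ i, dispersion x w i i = m) :
    ((m : ℝ) • diagonal w⁻¹ - dispersion x w ⊙ dispersion x w).PosSemidef := by
  have h : (m : ℝ) • diagonal w⁻¹ - dispersion x w ⊙ dispersion x w =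
      dispersion x w ⊙ (diagonal w⁻¹ - dispersion x w) := by
    ext i j
    by_cases hij : i = j
    · subst hij
      simp [hdiag, mul_sub]
    · simp [hij]
  rw [h]
  exact (posSemidef_dispersion hM.posSemidef).hadamard
    (posSemidef_diagonal_inv_sub_dispersion hw hM.det_pos.ne'.isUnit)

open scoped ComplexOrder in
lemma spectrum_map_rateMatrix_subset_Icc (hw : ∀ i, 0 < w i) (hM : (Mmat x w).PosDef)
    (hdiag : ∀ i, dispersion x w i i = m) :
    spectrum ℂ ((rateMatrix x w).map (Complex.ofReal : ℝ → ℂ)) ⊆ Set.Icc 0 (m : ℝ) :=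
  spectrum_map_diagonal_mul_subset_Icc hw
    ((posSemidef_dispersion hM.posSemidef).hadamard (posSemidef_dispersion hM.posSemidef))
    (posSemidef_smul_diagonal_inv_sub_hadamard hw hM hdiag)

lemma exists_globalRate_eq_one_sub_div (hn : 2 ≤ n) (hw : ∀ i, 0 < w i)
    (hM : (Mmat x w).PosDef) (hdiag : ∀ i, dispersion x w i i = m) :
    ∃ κ ∈ Set.Icc (0 : ℝ) m, ∀ {α : ℝ} {R : Matrix (Fin n) (Fin n) ℝ}, α < m → κ ≤ m - 2 * α →
      HasFDerivAt (Talg x α) (LinearMap.toContinuousLinearMap (toLin' R)) w →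
        ∀ h, globalRate R h = 1 - κ / (m - α) := by
  have hdet : IsUnit (Mmat x w).det := hM.det_pos.ne'.isUnit
  obtain ⟨κ, hκ, hrate⟩ := exists_globalRate_one_sub_smul_eq hn
    (toLin'_map_ofReal_mem_Gam fun j => (sum_rateMatrix hdet j).trans (hdiag j))
    (spectrum_map_rateMatrix_subset_Icc hw hM hdiag)
  refine ⟨κ, hκ, fun {α R} hα hκα hR h => ?_⟩
  have hα0 : 0 < (m : ℝ) - α := sub_pos.2 hα
  obtain rfl := eq_one_sub_smul_rateMatrix_of_hasFDerivAt hα0.ne' hdet hdiag hR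
  have hstep : ((m : ℝ) - α)⁻¹ * (κ + m) ≤ 2 := by
    rw [inv_mul_le_iff₀ hα0]
    linarith
  rw [hrate _ (inv_nonneg.2 hα0.le) hstep h, inv_mul_eq_div]

end Design

/-- Global rate comparison: with `w*` an interior global maximizer, if `r(0) ≥ 2α/m`, then
`1 − r(α) = (m/(m−α))(1 − r(0))`, and consequently `r(α) ≤ r(0)`. -/
theorem stmt_7 {n m : ℕ} (hm : 2 ≤ m) (hnm : m ≤ n)
    (x : Fin n → Fin m → ℝ) (hrank : (Matrix.of x).rank = m)
    (α : ℝ) (hα0 : 0 ≤ α) (hαm : α < m)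
    (wstar : Fin n → ℝ) (hpos : ∀ i, 0 < wstar i) (hsum : ∑ i, wstar i = 1)
    (hopt : ∀ v : Fin n → ℝ, (∀ i, 0 ≤ v i) → ∑ i, v i = 1 →
      (Mmat x v).det ≤ (Mmat x wstar).det)
    (Rα R0 : Matrix (Fin n) (Fin n) ℝ)
    (hRα : HasFDerivAt (Talg x α)
      (LinearMap.toContinuousLinearMap (Matrix.toLin' Rα)) wstar)
    (hR0 : HasFDerivAt (Talg x 0)
      (LinearMap.toContinuousLinearMap (Matrix.toLin' R0)) wstar)
    (hmapα : ∀ γ ∈ Gam n, Matrix.toLin' (Rα.map (Complex.ofReal : ℝ → ℂ)) γ ∈ Gam n)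
    (hmap0 : ∀ γ ∈ Gam n, Matrix.toLin' (R0.map (Complex.ofReal : ℝ → ℂ)) γ ∈ Gam n)
    (hbig : 2 * α / m ≤ globalRate R0 hmap0) :
    1 - globalRate Rα hmapα = ((m : ℝ) / ((m : ℝ) - α)) * (1 - globalRate R0 hmap0) ∧
      globalRate Rα hmapα ≤ globalRate R0 hmap0 := by
  have hM := posDef_Mmat hrank hpos
  have hdet := hM.det_pos.ne'.isUnit
  have hmax : IsMaxOn (fun v => (Mmat x v).det) (stdSimplex ℝ (Fin n)) wstar :=
    fun v hv => hopt v hv.1 hv.2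
  have hdiag := dispersion_self_eq_of_isLocalMaxOn hpos hsum hdet hmax.localize
  obtain ⟨κ, ⟨hκ0, hκm⟩, hrate⟩ :=
    exists_globalRate_eq_one_sub_div (hm.trans hnm) hpos hM hdiag
  have hm0 : (0 : ℝ) < m := hα0.trans_lt hαm
  have hmα : 0 < (m : ℝ) - α := sub_pos.2 hαm
  have hrate0 : globalRate R0 hmap0 = 1 - κ / m := by
    simpa using hrate hm0 (by simpa using hκm) hR0 hmap0
  have hκα : κ ≤ m - 2 * α := by
    rw [hrate0] at hbig
    field_simp at hbig
    linarith
  have hrateα : globalRate Rα hmapα = 1 - κ / (m - α) := hrate hαm hκα hRα hmapα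
  rw [hrateα, hrate0]
  constructor
  · field_simp
    ring
  · gcongr
    linarith
end
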